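/- Let ν > 0 and let Φ₋, Φ, Φ₊ : ℝ → ℝ be differentiable on (0,∞) satisfying, for all x > 0: Φ₋'(x) = −xΦ(x)/(2ν), Φ'(x) = −xΦ₊(x)/(2(ν+1)), Φ'(x) = (2ν/x)(Φ₋(x) − Φ(x)), and Φ₊'(x) = (2(ν+1)/x)(Φ(x) − Φ₊(x)). Define Θ(x) = Φ(x)² − Φ₋(x)Φ₊(x). Then for all x > 0, the function x ↦ x^(2ν+2)Θ(x) is differentiable with derivative (d/dx)(x^(2ν+2)Θ(x)) = −(2/ν)·x^(2ν+2)·Φ(x)·Φ'(x). -/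

import Mathlib

/-!
The relations between `Φ₋`, `Φ` and `Φ₊` make the Turánian `Θ = Φ² − Φ₋Φ₊` a solution of the linear
equation `Θ' = −(2/ν) Φ Φ' − ((2ν + 2)/x) Θ`, whose integrating factor is `x ^ (2ν + 2)`.
-/

/-- The Turánian `Θ_ν = Φ_ν² - Φ_{ν-1} Φ_{ν+1}` of a family of functions, encoded through the three
members `Φ_{ν-1}`, `Φ_ν`, `Φ_{ν+1}` that occur in it, in this order. -/
def turanian {α R : Type*} [Ring R] (Φm Φ Φp : α → R) (x : α) : R :=
  Φ x ^ 2 - Φm x * Φp x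

theorem hasDerivAt_turanian {𝕜 : Type*} [NontriviallyNormedField 𝕜] {ν x : 𝕜} {Φm Φ Φp : 𝕜 → 𝕜}
    (hν : ν ≠ 0) (hν₁ : ν + 1 ≠ 0)
    (hΦm : HasDerivAt Φm (-(x * Φ x) / (2 * ν)) x)
    (hΦ : HasDerivAt Φ (-(x * Φp x) / (2 * (ν + 1))) x)
    (hΦ' : deriv Φ x = (2 * ν / x) * (Φm x - Φ x))
    (hΦp : HasDerivAt Φp ((2 * (ν + 1) / x) * (Φ x - Φp x)) x) :
    HasDerivAt (turanian Φm Φ Φp)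
      (-(2 / ν) * Φ x * deriv Φ x - (2 * ν + 2) / x * turanian Φm Φ Φp x) x := by
  have deriv_Φm_mul_Φp : -(x * Φ x) / (2 * ν) * Φp x = (ν + 1) / ν * (Φ x * deriv Φ x) := by
    rw [hΦ.deriv]
    field_simp
  have Φm_mul_deriv_Φp : Φm x * ((2 * (ν + 1) / x) * (Φ x - Φp x)) =
      (ν + 1) / ν * (Φ x * deriv Φ x) + (2 * ν + 2) / x * turanian Φm Φ Φp x := by
    rw [hΦ', turanian]
    field_simp
    ring
  have hΘ : HasDerivAt (turanian Φm Φ Φp) (2 * Φ x * deriv Φ x -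
      (-(x * Φ x) / (2 * ν) * Φp x + Φm x * ((2 * (ν + 1) / x) * (Φ x - Φp x)))) x :=
    ((hΦ.differentiableAt.hasDerivAt.fun_pow 2).fun_sub (hΦm.fun_mul hΦp)).congr_deriv (by simp)
  refine hΘ.congr_deriv ?_
  rw [deriv_Φm_mul_Φp, Φm_mul_deriv_Φp]
  field_simp
  ring

theorem hasDerivAt_rpow_mul_of_hasDerivAt_sub {f : ℝ → ℝ} {g p x : ℝ} (hx : x ≠ 0)
    (hf : HasDerivAt f (g - p / x * f x) x) :
    HasDerivAt (fun y => y ^ p * f y) (x ^ p * g) x := by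
  refine ((Real.hasDerivAt_rpow_const (Or.inl hx)).fun_mul hf).congr_deriv ?_
  rw [Real.rpow_sub_one hx]
  ring

theorem weighted_turanian_deriv_general {ν x : ℝ} {Φm Φ Φp : ℝ → ℝ}
    (hν : ν ≠ 0) (hν₁ : ν + 1 ≠ 0) (hx : 0 < x)
    (hΦm : HasDerivAt Φm (-(x * Φ x) / (2 * ν)) x)
    (hΦ : HasDerivAt Φ (-(x * Φp x) / (2 * (ν + 1))) x)
    (hΦ' : deriv Φ x = (2 * ν / x) * (Φm x - Φ x))
    (hΦp : HasDerivAt Φp ((2 * (ν + 1) / x) * (Φ x - Φp x)) x) :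
    HasDerivAt (fun y => y ^ (2 * ν + 2) * (Φ y ^ 2 - Φm y * Φp y))
      (-(2 / ν) * x ^ (2 * ν + 2) * Φ x * deriv Φ x) x := by
  have hΘ := hasDerivAt_turanian hν hν₁ hΦm hΦ hΦ' hΦp
  exact (hasDerivAt_rpow_mul_of_hasDerivAt_sub hx.ne' hΘ).congr_deriv (by ring)

/-- If the normalized cylinder functions `Φ₋, Φ, Φ₊` satisfy the derivative
relations, then for `Θ(x) = Φ(x)² − Φ₋(x)Φ₊(x)` one has
`(d/dx)(x^(2ν+2)Θ(x)) = −(2/ν)·x^(2ν+2)·Φ(x)·Φ'(x)` on `(0,∞)`. -/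
theorem weighted_turanian_deriv (ν : ℝ) (hν : 0 < ν) (Φm Φ Φp : ℝ → ℝ)
    (hΦm : ∀ x, 0 < x → HasDerivAt Φm (-(x * Φ x) / (2 * ν)) x)
    (hΦ : ∀ x, 0 < x → HasDerivAt Φ (-(x * Φp x) / (2 * (ν + 1))) x)
    (hΦ' : ∀ x, 0 < x → deriv Φ x = (2 * ν / x) * (Φm x - Φ x))
    (hΦp : ∀ x, 0 < x → HasDerivAt Φp ((2 * (ν + 1) / x) * (Φ x - Φp x)) x) :
    ∀ x, 0 < x →
      HasDerivAt (fun x => x ^ (2 * ν + 2) * (Φ x ^ 2 - Φm x * Φp x))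
        (-(2 / ν) * x ^ (2 * ν + 2) * Φ x * deriv Φ x) x :=
  fun x hx => weighted_turanian_deriv_general hν.ne' (by positivity) hx
    (hΦm x hx) (hΦ x hx) (hΦ' x hx) (hΦp x hx)
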